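/- Let Ω ⊂ ℝ^N be a bounded open set, r ≥ 0, and F ∈ L^∞(Ω × Ω, [0,+∞)). Then limsup_{ε→0⁺} ∫_{S^{N-1}} ∫_Ω χ_Ω(x+εn) F(x+εn, x)/ε^r dx dH^{N-1}(n) ≥ N · liminf_{s→+∞} s · L^{2N}({(x,y) ∈ Ω×Ω : F(y,x)/|y−x|^{r+N} > s}). -/

import Mathlib

open MeasureTheory Metric Set Filter ENNReal
open scoped Topology

noncomputable section

abbrev EE (m : ℕ) := EuclideanSpace ℝ (Fin (m + 1))

/-- Polar coordinates for `lintegral`. -/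
lemma aux_polar (m : ℕ) (f : EE m → ℝ≥0∞) (hf : Measurable f) :
    ∫⁻ v, f v = ∫⁻ t in Ioi (0 : ℝ), ENNReal.ofReal (t ^ m) *
      ∫⁻ n : sphere (0 : EE m) 1, f (t • n.1)
        ∂(volume : Measure (EE m)).toSphere := by
  have hdim : Module.finrank ℝ (EE m) - 1 = m := by simp
  have h1 := (volume : Measure (EE m)).measurePreserving_homeomorphUnitSphereProd
  rw [hdim] at h1
  have hm : Measurable (fun p : sphere (0 : EE m) 1 × Ioi (0 : ℝ) => f (p.2.1 • p.1.1)) := by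
    apply hf.comp
    fun_prop
  calc ∫⁻ v, f v = ∫⁻ x : ({(0)}ᶜ : Set (EE m)), f x.1 ∂((volume : Measure (EE m)).comap (↑)) := by
        rw [lintegral_subtype_comap (measurableSet_singleton _).compl f,
          restrict_compl_singleton]
    _ = ∫⁻ p : sphere (0 : EE m) 1 × Ioi (0 : ℝ), f (p.2.1 • p.1.1)
          ∂((volume : Measure (EE m)).toSphere.prod (.volumeIoiPow m)) := by
        rw [← h1.lintegral_comp_emb (Homeomorph.measurableEmbedding _)]
        refine lintegral_congr fun x => ?_
        congr 1
        have hx : ‖x.1‖ ≠ 0 := norm_ne_zero_iff.2 x.2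
        simp [smul_smul, hx]
    _ = _ := by
        rw [lintegral_prod_symm' _ hm, Measure.volumeIoiPow,
          lintegral_withDensity_eq_lintegral_mul _ (by fun_prop) hm.lintegral_prod_left',
          ← lintegral_subtype_comap measurableSet_Ioi]
        rfl

/-- one-dimensional estimate -/
lemma aux_lin {a b t t' R d : ℝ} (ha : |a| ≤ d) (hb : |b| ≤ d) (hab : |a - b| ≤ d)
    (ht : 0 ≤ t) (ht' : 0 ≤ t') (htR : t ≤ R) (htR' : t' ≤ R) : |t * a - t' * b| ≤ R * d := by
  have key : ∀ a b : ℝ, ∀ t t' : ℝ, |a| ≤ d → |b| ≤ d → |a - b| ≤ d → 0 ≤ t → 0 ≤ t' → t ≤ R →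
      t' ≤ R → t * a - t' * b ≤ R * d := by
    intro a b t t' ha hb hab ht ht' htR htR'
    rw [abs_le] at ha hb hab
    have hd : 0 ≤ d := by linarith
    have hR : 0 ≤ R := by linarith
    rcases le_total 0 a with h1 | h1 <;> rcases le_total 0 b with h2 | h2
    · nlinarith [mul_le_mul htR ha.2 h1 hR, mul_nonneg ht' h2]
    · nlinarith [mul_le_mul_of_nonneg_right htR h1, mul_le_mul_of_nonpos_right htR' h2,
        mul_le_mul_of_nonneg_left hab.2 hR]
    · nlinarith [mul_nonneg hR hd, mul_nonneg ht' h2, mul_nonpos_of_nonneg_of_nonpos ht h1]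
    · nlinarith [mul_le_mul htR' (by linarith : -b ≤ d) (by linarith) hR,
        mul_nonpos_of_nonneg_of_nonpos ht h1]
  rw [abs_le]
  have h1 := key a b t t' ha hb hab ht ht' htR htR'
  have h2 := key b a t' t hb ha (by rwa [abs_sub_comm]) ht' ht htR' htR
  constructor <;> linarith

/-- The shell over a small set. -/
lemma aux_shell (m : ℕ) (T : Set (EE m)) (hT : MeasurableSet T)
    (ε : ℝ) (hε : 0 < ε) (hε1 : ε ≤ 1) (hd : ediam T ≤ ENNReal.ofReal ε) :
    (volume : Measure (EE m)).toSphere (Subtype.val ⁻¹' T) ≤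
      ENNReal.ofReal ((1 + ε / 2) * (1 + ε) ^ m) * ediam T ^ m := by
  rcases (T ∩ sphere (0 : EE m) 1).eq_empty_or_nonempty with hemp | ⟨n0, hn0T, hn0⟩
  · have : (Subtype.val ⁻¹' T : Set (sphere (0 : EE m) 1)) = ∅ := by
      ext x
      simp only [mem_preimage, mem_empty_iff_false, iff_false]
      intro hx
      have : x.1 ∈ T ∩ sphere (0 : EE m) 1 := ⟨hx, x.2⟩
      rw [hemp] at this
      exact this
    rw [this]; simp
  have hn0' : ‖n0‖ = 1 := by simpa using hn0
  have hTtop : ediam T ≠ ⊤ := ne_top_of_le_ne_top ENNReal.ofReal_ne_top hd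
  set d := (ediam T).toReal with hdd
  have hdT : ediam T = ENNReal.ofReal d := (ENNReal.ofReal_toReal hTtop).symm
  have hd0 : 0 ≤ d := ENNReal.toReal_nonneg
  have hdε : d ≤ ε := by
    rw [hdT] at hd
    exact (ENNReal.ofReal_le_ofReal_iff hε.le).1 hd
  have hdist : ∀ x ∈ T, ∀ y ∈ T, ‖x - y‖ ≤ d := by
    intro x hx y hy
    rw [← dist_eq_norm]
    have := edist_le_ediam_of_mem hx hy
    rw [edist_dist, hdT] at this
    exact (ENNReal.ofReal_le_ofReal_iff hd0).1 this
  -- the shell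
  set S : Set (EE m) := {x | ‖x‖⁻¹ • x ∈ T ∧ 1 < ‖x‖ ∧ ‖x‖ < 1 + ε} with hS
  have hSm : MeasurableSet S := by
    have e1 : Measurable (fun x : EE m => ‖x‖⁻¹ • x) := by fun_prop
    exact (e1 hT).inter ((measurableSet_lt measurable_const measurable_norm).inter
      (measurableSet_lt measurable_norm measurable_const))
  have hlow : ENNReal.ofReal ε * (volume : Measure (EE m)).toSphere (Subtype.val ⁻¹' T) ≤ volume S := by
    rw [← lintegral_indicator_one hSm,
      aux_polar m _ (measurable_one.indicator hSm)]
    calc ENNReal.ofReal ε * (volume : Measure (EE m)).toSphere (Subtype.val ⁻¹' T)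
        = ∫⁻ t in Ioo (1 : ℝ) (1 + ε), (volume : Measure (EE m)).toSphere (Subtype.val ⁻¹' T) := by
          rw [setLIntegral_const, Real.volume_Ioo, mul_comm]
          congr 2; ring
      _ ≤ ∫⁻ t in Ioo (1 : ℝ) (1 + ε), ENNReal.ofReal (t ^ m) *
            ∫⁻ n : sphere (0 : EE m) 1, S.indicator 1 (t • n.1) ∂(volume : Measure (EE m)).toSphere := by
          refine setLIntegral_mono' measurableSet_Ioo fun t ht => ?_
          have ht1 : (1 : ℝ≥0∞) ≤ ENNReal.ofReal (t ^ m) := by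
            rw [ENNReal.one_le_ofReal]
            exact one_le_pow₀ ht.1.le
          refine le_trans ?_ (mul_le_mul_left ht1 _)
          rw [one_mul, ← lintegral_indicator_one (measurable_subtype_coe hT)]
          refine lintegral_mono fun n => ?_
          by_cases hn : n.1 ∈ T
          · have hnn : ‖n.1‖ = 1 := by simp
            have ht0 : (0:ℝ) < t := lt_trans one_pos ht.1
            have : t • n.1 ∈ S := by
              have e : ‖t • n.1‖ = t := by rw [norm_smul, hnn, Real.norm_of_nonneg ht0.le, mul_one]
              refine ⟨?_, ?_, ?_⟩
              · rw [e, smul_smul, inv_mul_cancel₀ ht0.ne', one_smul]; exact hn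
              · rw [e]; exact ht.1
              · rw [e]; exact ht.2
            simp [indicator_of_mem this, indicator_of_mem (show n ∈ Subtype.val ⁻¹' T from hn)]
          · rw [indicator_of_notMem (show n ∉ Subtype.val ⁻¹' T from hn)]
            exact zero_le
      _ ≤ _ := lintegral_mono_set fun t ht => lt_trans one_pos ht.1
  have hup : volume S ≤ ENNReal.ofReal (ε * (1 + ε / 2)) * (ENNReal.ofReal (1 + ε) * ediam T) ^ m := by
    obtain ⟨b, hb⟩ := Orthonormal.exists_orthonormalBasis_extension_of_card_eq (𝕜 := ℝ) (E := EE m)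
      (ι := Fin (m + 1)) (by simp) (v := fun _ => n0) (s := {0}) (by
        rw [orthonormal_iff_ite]
        rintro ⟨i, hi⟩ ⟨j, hj⟩
        simp only [mem_singleton_iff] at hi hj
        subst hi; subst hj
        simp [hn0'])
    have hb0 : b 0 = n0 := hb 0 rfl
    set φ : EE m → (Fin (m + 1) → ℝ) := fun x => (b.repr x).ofLp with hφ
    have hmp : MeasurePreserving φ volume volume :=
      (PiLp.volume_preserving_ofLp (Fin (m + 1))).comp b.measurePreserving_repr
    have hφi : ∀ x i, φ x i = inner ℝ (b i) x := fun x i => b.repr_apply_apply x i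
    -- description of points of the shell
    have hpt : ∀ x ∈ S, ∃ n ∈ T, ‖n‖ = 1 ∧ ∃ t : ℝ, 1 < t ∧ t < 1 + ε ∧ x = t • n := by
      intro x hx
      have hx0 : ‖x‖ ≠ 0 := by have := hx.2.1; intro h; rw [h] at this; linarith
      refine ⟨_, hx.1, ?_, ‖x‖, hx.2.1, hx.2.2, ?_⟩
      · rw [norm_smul, norm_inv, norm_norm, inv_mul_cancel₀ hx0]
      · rw [smul_smul, mul_inv_cancel₀ hx0, one_smul]
    calc volume S ≤ volume (φ ⁻¹' (φ '' S)) := measure_mono (subset_preimage_image _ _)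
      _ ≤ volume (φ '' S) := hmp.measure_preimage_le _
      _ ≤ ∏ i, ediam (Function.eval i '' (φ '' S)) := Real.volume_pi_le_prod_diam _
      _ = ediam (Function.eval 0 '' (φ '' S)) *
          ∏ i : Fin m, ediam (Function.eval i.succ '' (φ '' S)) := Fin.prod_univ_succ _
      _ ≤ ENNReal.ofReal (ε * (1 + ε / 2)) *
          ∏ i : Fin m, (ENNReal.ofReal (1 + ε) * ediam T) := by
          refine mul_le_mul' ?_ (Finset.prod_le_prod' fun i _ => ?_)
          ·
            have hrange : ∀ x ∈ S, 1 - ε ^ 2 / 2 ≤ φ x 0 ∧ φ x 0 ≤ 1 + ε := by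
              intro x hx
              obtain ⟨n, hnT, hn1, t, ht1, ht2, rfl⟩ := hpt x hx
              rw [hφi, hb0, inner_smul_right]
              have h1 := hdist n0 hn0T n hnT
              have h2 := norm_sub_sq_real n0 n
              rw [hn0', hn1] at h2
              have h3 : ‖n0 - n‖ ^ 2 ≤ ε ^ 2 :=
                pow_le_pow_left₀ (norm_nonneg _) (h1.trans hdε) 2
              have h4 := real_inner_le_norm n0 n
              rw [hn0', hn1] at h4
              constructor
              · have hin : 1 - ε ^ 2 / 2 ≤ inner ℝ n0 n := by nlinarith
                have hin0 : 0 ≤ inner ℝ n0 n := by nlinarith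
                nlinarith [mul_nonneg (sub_nonneg.2 ht1.le) hin0]
              · nlinarith
            refine ediam_le_of_forall_dist_le ?_ |>.trans_eq rfl
            rintro _ ⟨_, ⟨x, hx, rfl⟩, rfl⟩ _ ⟨_, ⟨y, hy, rfl⟩, rfl⟩
            rw [Real.dist_eq]
            have hx' := hrange x hx
            have hy' := hrange y hy
            simp only [Function.eval]
            rw [abs_le]
            constructor <;> nlinarith
          · rw [hdT, ← ENNReal.ofReal_mul (by linarith)]
            refine ediam_le_of_forall_dist_le ?_
            rintro _ ⟨_, ⟨x, hx, rfl⟩, rfl⟩ _ ⟨_, ⟨y, hy, rfl⟩, rfl⟩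
            simp only [Function.eval]
            obtain ⟨n, hnT, hn1, t, ht1, ht2, rfl⟩ := hpt x hx
            obtain ⟨n', hnT', hn1', t', ht1', ht2', rfl⟩ := hpt y hy
            have hz : inner ℝ (b i.succ) n0 = 0 := by
              rw [← hb0]
              exact b.orthonormal.2 (Fin.succ_ne_zero i)
            have hbd : ∀ w : EE m, ‖w‖ ≤ d → |inner ℝ (b i.succ) w| ≤ d := by
              intro w hw
              have := abs_real_inner_le_norm (b i.succ) w
              rw [b.orthonormal.1, one_mul] at this
              exact this.trans hw
            have q1 := hbd _ (hdist n hnT n0 hn0T)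
            have q2 := hbd _ (hdist n' hnT' n0 hn0T)
            have q3 := hbd _ (hdist n hnT n' hnT')
            rw [inner_sub_right, hz, sub_zero] at q1 q2
            rw [inner_sub_right] at q3
            rw [Real.dist_eq, hφi, hφi, inner_smul_right, inner_smul_right]
            exact aux_lin q1 q2 q3 (by linarith) (by linarith) ht2.le ht2'.le
      _ = _ := by simp
  have hεp : ENNReal.ofReal ε ≠ 0 := by simpa using hε
  refine (ENNReal.mul_le_mul_iff_right hεp ENNReal.ofReal_ne_top).1 ((hlow.trans hup).trans_eq ?_)
  rw [mul_pow, ENNReal.ofReal_mul hε.le, ENNReal.ofReal_mul (by positivity),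
    ENNReal.ofReal_pow (by positivity)]
  ring

/-- The (unnormalized) Hausdorff measure dominates the surface measure. -/
lemma aux_haus (m : ℕ) :
    ((volume : Measure (EE m)).toSphere).map Subtype.val ≤ (μH[((m + 1 : ℕ) : ℝ) - 1] : Measure (EE m)) := by
  set ν := ((volume : Measure (EE m)).toSphere).map (Subtype.val : sphere (0 : EE m) 1 → EE m) with hν
  have hexp : ((m + 1 : ℕ) : ℝ) - 1 = (m : ℝ) := by push_cast; ring
  rw [hexp]
  have hK : ∀ ε : ℝ, 0 < ε → ε ≤ 1 → ∀ A : Set (EE m),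
      ν A ≤ ENNReal.ofReal ((1 + ε / 2) * (1 + ε) ^ m) * (μH[(m : ℝ)] : Measure (EE m)) A := by
    intro ε hε hε1 A
    set K := ENNReal.ofReal ((1 + ε / 2) * (1 + ε) ^ m) with hKdef
    have hK0 : K ≠ 0 := by
      rw [hKdef, Ne, ENNReal.ofReal_eq_zero, not_le]; positivity
    have hKt : K ≠ ⊤ := ENNReal.ofReal_ne_top
    have hle : K⁻¹ • ν ≤ (μH[(m : ℝ)] : Measure (EE m)) := by
      refine Measure.le_hausdorffMeasure _ _ (ENNReal.ofReal ε) (by simpa using hε) fun s hs => ?_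
      rw [Measure.smul_apply, smul_eq_mul, ENNReal.inv_mul_le_iff hK0 hKt, ENNReal.rpow_natCast]
      have hs' : ediam (closure s) ≤ ENNReal.ofReal ε := by rwa [ediam_closure]
      have := aux_shell m (closure s) isClosed_closure.measurableSet ε hε hε1 hs'
      rw [ediam_closure] at this
      refine (measure_mono subset_closure).trans ?_
      rw [hν, Measure.map_apply measurable_subtype_coe isClosed_closure.measurableSet]
      exact this
    have := hle A
    rwa [Measure.smul_apply, smul_eq_mul, ENNReal.inv_mul_le_iff hK0 hKt] at this
  refine Measure.le_iff'.2 fun A => ?_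
  have hlim : Tendsto (fun ε : ℝ => ENNReal.ofReal ((1 + ε / 2) * (1 + ε) ^ m) *
      (μH[(m : ℝ)] : Measure (EE m)) A) (𝓝[>] 0) (𝓝 (1 * (μH[(m : ℝ)] : Measure (EE m)) A)) := by
    refine ENNReal.Tendsto.mul_const ?_ (Or.inl one_ne_zero)
    have : Tendsto (fun ε : ℝ => (1 + ε / 2) * (1 + ε) ^ m) (𝓝[>] 0) (𝓝 1) := by
      have hc : Continuous (fun ε : ℝ => (1 + ε / 2) * (1 + ε) ^ m) := by fun_prop
      have := (hc.tendsto 0).mono_left (nhdsWithin_le_nhds (s := Ioi 0))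
      simpa using this
    have h2 := (ENNReal.continuous_ofReal.tendsto 1).comp this
    rw [ENNReal.ofReal_one] at h2
    exact h2
  rw [one_mul] at hlim
  refine ge_of_tendsto hlim ?_
  filter_upwards [Ioc_mem_nhdsGT (zero_lt_one' ℝ)] with ε hε
  exact hK ε hε.1 hε.2 A

lemma aux_haus_lintegral (m : ℕ) (G : EE m → ℝ≥0∞) :
    ∫⁻ n : sphere (0 : EE m) 1, G n.1 ∂(volume : Measure (EE m)).toSphere ≤
      ∫⁻ n in sphere (0 : EE m) 1, G n ∂(μH[((m + 1 : ℕ) : ℝ) - 1] : Measure (EE m)) := by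
  have hemb : MeasurableEmbedding (Subtype.val : sphere (0 : EE m) 1 → EE m) :=
    MeasurableEmbedding.subtype_coe isClosed_sphere.measurableSet
  rw [← hemb.lintegral_map]
  refine lintegral_mono' ?_ le_rfl
  have h := Measure.restrict_mono (le_refl (sphere (0 : EE m) 1)) (aux_haus m)
  refine le_trans (le_of_eq ?_) h
  rw [hemb.restrict_map]
  simp

lemma aux_log {α β : ℝ} (hα : 0 < α) (hαβ : α ≤ β) :
    ∫⁻ t in Ioo α β, ENNReal.ofReal t⁻¹ = ENNReal.ofReal (Real.log (β / α)) := by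
  rw [Measure.restrict_congr_set Ioo_ae_eq_Ioc, ← ofReal_integral_eq_lintegral_ofReal,
    ← intervalIntegral.integral_of_le hαβ, integral_inv_of_pos hα (hα.trans_le hαβ)]
  · have : IntervalIntegrable (fun t : ℝ => t⁻¹) volume α β :=
      intervalIntegral.intervalIntegrable_inv (fun t ht => by
        rw [uIcc_of_le hαβ] at ht
        exact (hα.trans_le ht.1).ne') continuousOn_id
    exact this.1
  · filter_upwards [ae_restrict_mem measurableSet_Ioc] with t ht
    exact inv_nonneg.2 (hα.trans ht.1).le

/-- the averaged estimate -/
lemma aux_main (m : ℕ) (Ω : Set (EE m)) (hΩopen : IsOpen Ω)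
    (r : ℝ) (hr : 0 ≤ r) (F : EE m → EE m → ℝ)
    (hFmeas : Measurable (Function.uncurry F))
    (hFpos : ∀ x y, 0 ≤ F x y) (C : ℝ) (hFbd : ∀ x y, F x y ≤ C)
    (a L : ℝ≥0∞) (ε₀ s₀ R : ℝ) (hε₀ : 0 < ε₀) (hs₀ : 0 < s₀)
    (hs₀C : C / ε₀ ^ (r + ((m + 1 : ℕ) : ℝ)) ≤ s₀) (hR : 0 < R) (hRε : 1 / R ≤ ε₀)
    (hRs : s₀ ≤ R ^ (m + 1))
    (hg : ∀ t ∈ Ioo 0 ε₀, ∫⁻ n in sphere (0 : EE m) 1,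
            (∫⁻ x in Ω,
              (Ω.indicator (fun _ => (1 : ℝ≥0∞)) (x + t • n)) *
                ENNReal.ofReal (F (x + t • n) x / t ^ r)) ∂(μH[((m + 1 : ℕ) : ℝ) - 1]) ≤ a)
    (hL : ∀ s, s₀ ≤ s → L ≤ ENNReal.ofReal s *
              volume {p : EE m × EE m |
                p.1 ∈ Ω ∧ p.2 ∈ Ω ∧ s < F p.2 p.1 / ‖p.2 - p.1‖ ^ (r + ((m + 1 : ℕ) : ℝ))}) :
    L * ENNReal.ofReal (Real.log (R ^ (m + 1) / s₀)) ≤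
      a * ENNReal.ofReal (Real.log (ε₀ / (1 / R))) +
        volume Ω * volume (ball (0 : EE m) 1) := by
  set S := R ^ (m + 1) with hS
  set τ := 1 / R with hτ
  have hτ0 : 0 < τ := by positivity
  have hS0 : 0 < S := by positivity
  set q : ℝ := r + ((m + 1 : ℕ) : ℝ) with hq
  have hΩm := hΩopen.measurableSet
  -- the kernel
  set H : EE m × EE m → ℝ := fun p => F (p.2 + p.1) p.2 / ‖p.1‖ ^ q with hH
  have hF1 : Measurable (fun p : EE m × EE m => F (p.2 + p.1) p.2) :=
    hFmeas.comp ((measurable_snd.add measurable_fst).prodMk measurable_snd)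
  have hHm : Measurable H := hF1.div (measurable_fst.norm.pow_const q)
  set K : EE m → ℝ≥0∞ := fun v => ∫⁻ x in Ω,
    (Ω.indicator (fun _ => (1 : ℝ≥0∞)) (x + v)) * ENNReal.ofReal (F (x + v) x / ‖v‖ ^ r) with hK
  have hKint : Measurable (fun p : EE m × EE m => (Ω.indicator (fun _ => (1 : ℝ≥0∞)) (p.2 + p.1)) *
      ENNReal.ofReal (F (p.2 + p.1) p.2 / ‖p.1‖ ^ r)) :=
    ((measurable_const.indicator hΩm).comp (measurable_snd.add measurable_fst)).mul
      (hF1.div (measurable_fst.norm.pow_const r)).ennreal_ofReal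
  have hKm : Measurable K := hKint.lintegral_prod_right'
  set A : Set (EE m × EE m) := {p | p.2 ∈ Ω ∧ p.2 + p.1 ∈ Ω} with hA
  have hAm : MeasurableSet A :=
    (measurable_snd hΩm).inter ((measurable_snd.add measurable_fst) hΩm)
  set D : Set (ℝ × (EE m × EE m)) := {z | z.2 ∈ A ∧ z.1 < H z.2} with hD
  have hDm : MeasurableSet D :=
    (measurable_snd hAm).inter (measurableSet_lt measurable_fst (hHm.comp measurable_snd))
  have hvol : ∀ s : ℝ, volume {p : EE m × EE m |
      p.1 ∈ Ω ∧ p.2 ∈ Ω ∧ s < F p.2 p.1 / ‖p.2 - p.1‖ ^ q} = volume (Prod.mk s ⁻¹' D) := by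
    intro s
    have hmp := measurePreserving_prod_add_swap (volume : Measure (EE m)) (volume : Measure (EE m))
    rw [← Measure.volume_eq_prod] at hmp
    have hms : MeasurableSet {p : EE m × EE m |
        p.1 ∈ Ω ∧ p.2 ∈ Ω ∧ s < F p.2 p.1 / ‖p.2 - p.1‖ ^ q} := by
      refine (measurable_fst hΩm).inter ((measurable_snd hΩm).inter ?_)
      exact measurableSet_lt measurable_const
        ((hFmeas.comp (measurable_snd.prodMk measurable_fst)).div
          ((measurable_snd.sub measurable_fst).norm.pow_const q))
    rw [← hmp.measure_preimage hms.nullMeasurableSet]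
    congr 1
    ext ⟨v, x⟩
    simp [hD, hA, hH, and_assoc]
  -- lower bound
  have hlow : L * ENNReal.ofReal (Real.log (S / s₀)) ≤
      ∫⁻ s in Ioo s₀ S, volume (Prod.mk s ⁻¹' D) := by
    rw [← aux_log hs₀ hRs, ← lintegral_const_mul _ (by fun_prop)]
    refine setLIntegral_mono' measurableSet_Ioo fun s hs => ?_
    have hs0 : 0 < s := hs₀.trans hs.1
    have h1 := hL s hs.1.le
    rw [hvol] at h1
    rw [ENNReal.ofReal_inv_of_pos hs0, ← div_eq_mul_inv]
    exact ENNReal.div_le_of_le_mul' h1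
  -- Tonelli
  have hton : ∫⁻ s in Ioo s₀ S, volume (Prod.mk s ⁻¹' D) =
      ∫⁻ v : EE m, ∫⁻ x : EE m, (volume.restrict (Ioo s₀ S)) ((fun s => (s, (v, x))) ⁻¹' D) := by
    rw [← Measure.prod_apply hDm, Measure.prod_apply_symm hDm, Measure.volume_eq_prod,
      lintegral_prod _ (measurable_measure_prodMk_right hDm).aemeasurable]
  -- pointwise bound
  have hpw : ∀ v : EE m, ∫⁻ x : EE m, (volume.restrict (Ioo s₀ S)) ((fun s => (s, (v, x))) ⁻¹' D) ≤
      (closedBall (0 : EE m) τ).indicator (fun _ => ENNReal.ofReal S * volume Ω) v +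
      {v : EE m | τ < ‖v‖ ∧ ‖v‖ < ε₀}.indicator
        (fun v => K v * ENNReal.ofReal ((‖v‖ ^ (m + 1))⁻¹)) v := by
    intro v
    have hΩ0 : ∀ x ∉ Ω, ((fun s : ℝ => (s, (v, x))) ⁻¹' D) = ∅ := by
      intro x hx
      ext s
      simp [hD, hA, hx]
    by_cases h1 : ‖v‖ ≤ τ
    · rw [indicator_of_mem (by simpa using h1)]
      refine le_trans ?_ le_self_add
      rw [← lintegral_indicator_const hΩm]
      refine lintegral_mono fun x => ?_
      by_cases hx : x ∈ Ω
      · rw [indicator_of_mem hx]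
        calc _ ≤ (volume.restrict (Ioo s₀ S)) univ := measure_mono (subset_univ _)
          _ = ENNReal.ofReal (S - s₀) := by simp
          _ ≤ _ := ENNReal.ofReal_le_ofReal (by linarith)
      · simp only [hΩ0 x hx]; simp
    · push Not at h1
      have hv0 : 0 < ‖v‖ := hτ0.trans h1
      by_cases h2 : ‖v‖ < ε₀
      · rw [indicator_of_mem (s := {v : EE m | τ < ‖v‖ ∧ ‖v‖ < ε₀}) ⟨h1, h2⟩]
        refine le_trans ?_ le_add_self
        simp only [hK]
        rw [← lintegral_mul_const' _ _ ENNReal.ofReal_ne_top, ← lintegral_indicator hΩm]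
        refine lintegral_mono fun x => ?_
        by_cases hx : x ∈ Ω
        · rw [indicator_of_mem hx]
          by_cases hxv : x + v ∈ Ω
          · rw [indicator_of_mem hxv, one_mul, ← ENNReal.ofReal_mul
              (div_nonneg (hFpos _ _) (by positivity))]
            have e : F (x + v) x / ‖v‖ ^ r * (‖v‖ ^ (m + 1))⁻¹ = H (v, x) := by
              simp only [hH, hq]
              rw [Real.rpow_add hv0, Real.rpow_natCast, ← div_eq_mul_inv, div_div]
            rw [e, Measure.restrict_apply' measurableSet_Ioo]
            calc _ ≤ volume (Ioo (0 : ℝ) (H (v, x))) :=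
                  measure_mono fun s hs => ⟨hs₀.trans hs.2.1, hs.1.2⟩
              _ = _ := by simp
          · have : ((fun s : ℝ => (s, (v, x))) ⁻¹' D) = ∅ := by
              ext s; simp [hD, hA, hxv]
            rw [this]; simp
        · simp only [hΩ0 x hx]; simp
      · push Not at h2
        refine le_trans (le_of_eq ?_) zero_le
        rw [lintegral_eq_zero_iff']
        · refine Filter.Eventually.of_forall fun x => ?_
          simp only [Pi.zero_apply]
          rw [Measure.restrict_apply' measurableSet_Ioo]
          convert measure_empty (μ := (volume : Measure ℝ))
          ext s
          simp only [mem_inter_iff, mem_empty_iff_false, iff_false]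
          rintro ⟨hs1, hs2⟩
          have hs3 : s < H (v, x) := hs1.2
          have : H (v, x) ≤ C / ε₀ ^ q := by
            have hC : 0 ≤ C := (hFpos 0 0).trans (hFbd 0 0)
            exact div_le_div₀ hC (hFbd _ _) (by positivity)
              (Real.rpow_le_rpow hε₀.le h2 (by positivity))
          linarith [hs2.1]
        · exact ((measurable_measure_prodMk_right hDm).comp measurable_prodMk_left).aemeasurable
  have hBm : MeasurableSet {v : EE m | τ < ‖v‖ ∧ ‖v‖ < ε₀} :=
    (measurableSet_lt measurable_const measurable_norm).inter
      (measurableSet_lt measurable_norm measurable_const)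
  have hGm : Measurable ({v : EE m | τ < ‖v‖ ∧ ‖v‖ < ε₀}.indicator
        (fun v => K v * ENNReal.ofReal ((‖v‖ ^ (m + 1))⁻¹))) :=
    (hKm.mul (by fun_prop)).indicator hBm
  -- the ball part
  have hball : ∫⁻ v : EE m, (closedBall (0 : EE m) τ).indicator
      (fun _ => ENNReal.ofReal S * volume Ω) v = volume Ω * volume (ball (0 : EE m) 1) := by
    rw [lintegral_indicator_const isClosed_closedBall.measurableSet,
      Measure.addHaar_closedBall _ _ hτ0.le]
    have : ENNReal.ofReal S * ENNReal.ofReal (τ ^ Module.finrank ℝ (EE m)) = 1 := by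
      rw [← ENNReal.ofReal_mul hS0.le, finrank_euclideanSpace_fin, hS, hτ, ← mul_pow,
        mul_one_div_cancel hR.ne', one_pow, ENNReal.ofReal_one]
    calc _ = (ENNReal.ofReal S * ENNReal.ofReal (τ ^ Module.finrank ℝ (EE m))) *
            (volume Ω * volume (ball (0 : EE m) 1)) := by ring
      _ = _ := by rw [this, one_mul]
  -- the polar part
  have hpol : ∫⁻ v : EE m, {v : EE m | τ < ‖v‖ ∧ ‖v‖ < ε₀}.indicator
        (fun v => K v * ENNReal.ofReal ((‖v‖ ^ (m + 1))⁻¹)) v ≤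
      a * ENNReal.ofReal (Real.log (ε₀ / τ)) := by
    rw [aux_polar m _ hGm, ← aux_log hτ0 hRε, ← lintegral_const_mul _ (by fun_prop)]
    rw [← lintegral_indicator measurableSet_Ioi, ← lintegral_indicator measurableSet_Ioo]
    refine lintegral_mono fun t => ?_
    by_cases ht : t ∈ Ioi (0 : ℝ)
    swap
    · rw [indicator_of_notMem ht]; exact zero_le
    rw [indicator_of_mem ht]
    have ht0 : (0 : ℝ) < t := ht
    have hnorm : ∀ n : sphere (0 : EE m) 1, ‖t • n.1‖ = t := by
      intro n
      rw [norm_smul, norm_eq_of_mem_sphere, Real.norm_of_nonneg ht0.le, mul_one]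
    by_cases ht2 : t ∈ Ioo τ ε₀
    · rw [indicator_of_mem ht2]
      have e1 : ∀ n : sphere (0 : EE m) 1, {v : EE m | τ < ‖v‖ ∧ ‖v‖ < ε₀}.indicator
          (fun v => K v * ENNReal.ofReal ((‖v‖ ^ (m + 1))⁻¹)) (t • n.1) =
          (∫⁻ x in Ω, (Ω.indicator (fun _ => (1 : ℝ≥0∞)) (x + t • n.1)) *
            ENNReal.ofReal (F (x + t • n.1) x / t ^ r)) * ENNReal.ofReal ((t ^ (m + 1))⁻¹) := by
        intro n
        rw [indicator_of_mem (by simp only [mem_ofPred_eq, hnorm n]; exact ht2)]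
        simp only [hK, hnorm n]
      rw [lintegral_congr e1, lintegral_mul_const' _ _ ENNReal.ofReal_ne_top]
      have h1 := (aux_haus_lintegral m (fun n => ∫⁻ x in Ω,
        (Ω.indicator (fun _ => (1 : ℝ≥0∞)) (x + t • n)) *
            ENNReal.ofReal (F (x + t • n) x / t ^ r))).trans (hg t ⟨ht0, ht2.2⟩)
      calc _ ≤ ENNReal.ofReal (t ^ m) * (a * ENNReal.ofReal ((t ^ (m + 1))⁻¹)) := by gcongr
        _ = a * (ENNReal.ofReal (t ^ m) * ENNReal.ofReal ((t ^ (m + 1))⁻¹)) := by ring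
        _ = _ := by
            rw [← ENNReal.ofReal_mul (by positivity)]
            congr 2
            field_simp
            ring
    · rw [indicator_of_notMem ht2]
      refine le_of_eq ?_
      have e1 : ∀ n : sphere (0 : EE m) 1, {v : EE m | τ < ‖v‖ ∧ ‖v‖ < ε₀}.indicator
          (fun v => K v * ENNReal.ofReal ((‖v‖ ^ (m + 1))⁻¹)) (t • n.1) = 0 := by
        intro n
        rw [indicator_of_notMem]
        simp only [mem_ofPred_eq, hnorm n]
        exact ht2
      rw [lintegral_congr e1]
      simp
  calc _ ≤ _ := hlow
    _ = _ := hton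
    _ ≤ _ := lintegral_mono hpw
    _ = _ := lintegral_add_right _ hGm
    _ ≤ _ := by
        rw [hball, add_comm]
        gcongr

/-- limsup over ε→0⁺ of the spherical integral of a bounded nonnegative
kernel `F` on a bounded open set is at least `N` times the liminf of `s · L^{2N}` of the
superlevel sets of `F(y,x)/|y-x|^{r+N}`. -/
theorem stmt_2 (N : ℕ) (Ω : Set (EuclideanSpace ℝ (Fin N)))
    (hΩopen : IsOpen Ω) (hΩbd : Bornology.IsBounded Ω)
    (r : ℝ) (hr : 0 ≤ r)
    (F : EuclideanSpace ℝ (Fin N) → EuclideanSpace ℝ (Fin N) → ℝ)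
    (hFmeas : Measurable (Function.uncurry F))
    (hFpos : ∀ x y, 0 ≤ F x y) (C : ℝ) (hFbd : ∀ x y, F x y ≤ C) :
    Filter.limsup
        (fun ε : ℝ =>
          ∫⁻ n in sphere (0 : EuclideanSpace ℝ (Fin N)) 1,
            (∫⁻ x in Ω,
              (Ω.indicator (fun _ => (1 : ℝ≥0∞)) (x + ε • n)) *
                ENNReal.ofReal (F (x + ε • n) x / ε ^ r)) ∂(μH[(N : ℝ) - 1]))
        (𝓝[>] (0 : ℝ)) ≥
      (N : ℝ≥0∞) *
        Filter.liminf
          (fun s : ℝ =>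
            ENNReal.ofReal s *
              volume {p : EuclideanSpace ℝ (Fin N) × EuclideanSpace ℝ (Fin N) |
                p.1 ∈ Ω ∧ p.2 ∈ Ω ∧ s < F p.2 p.1 / ‖p.2 - p.1‖ ^ (r + (N : ℝ))})
          Filter.atTop := by
  rcases N with _ | m
  · simp
  by_contra hcon
  rw [ge_iff_le, not_le] at hcon
  obtain ⟨a, ha, hab⟩ := exists_between hcon
  obtain ⟨b, hab, hb⟩ := exists_between hab
  have hatop : a ≠ ⊤ := hab.ne_top
  have hbtop : b ≠ ⊤ := hb.ne_top
  have hN0 : ((m + 1 : ℕ) : ℝ≥0∞) ≠ 0 := by simp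
  have hNt : ((m + 1 : ℕ) : ℝ≥0∞) ≠ ⊤ := ENNReal.natCast_ne_top _
  have hb' := ENNReal.div_lt_of_lt_mul' hb
  have ev1 := eventually_lt_of_limsup_lt ha
  have ev2 := eventually_lt_of_lt_liminf hb'
  obtain ⟨ε₀, hε₀, hsub⟩ := mem_nhdsGT_iff_exists_Ioo_subset.1 ev1
  obtain ⟨s₁, hs₁⟩ := eventually_atTop.1 ev2
  have hε₀ : 0 < ε₀ := hε₀
  set s₀ := max (max s₁ 1) (C / ε₀ ^ (r + ((m + 1 : ℕ) : ℝ))) with hs₀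
  have hs₀1 : 1 ≤ s₀ := (le_max_right _ _).trans (le_max_left _ _)
  have key : ∀ R : ℝ, 0 < R → 1 / R ≤ ε₀ → s₀ ≤ R ^ (m + 1) → _ := fun R hR h1 h2 =>
    aux_main m Ω hΩopen r hr F hFmeas hFpos C hFbd a (b / ((m + 1 : ℕ) : ℝ≥0∞)) ε₀ s₀ R hε₀
      (by linarith) (le_max_right _ _) hR h1 h2 (fun t ht => (hsub ht).le)
      (fun s hs => (hs₁ s (((le_max_left _ _).trans (le_max_left _ _)).trans hs)).le)
  set M := volume Ω * volume (ball (0 : EE m) 1) with hM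
  have hMt : M ≠ ⊤ := ENNReal.mul_ne_top hΩbd.measure_lt_top.ne measure_ball_lt_top.ne
  -- pass to the reals
  have hreal : ∀ R : ℝ, 1 ≤ R → 1 / R ≤ ε₀ → s₀ ≤ R →
      b.toReal / (m + 1 : ℕ) * ((m + 1 : ℕ) * Real.log R - Real.log s₀) ≤
        a.toReal * (Real.log ε₀ + Real.log R) + M.toReal := by
    intro R hR h1 h2
    have hR0 : 0 < R := by linarith
    have h2' : s₀ ≤ R ^ (m + 1) := h2.trans (le_self_pow₀ hR (by simp))
    have h3 := key R hR0 h1 h2'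
    have hl1 : 0 ≤ Real.log (R ^ (m + 1) / s₀) :=
      Real.log_nonneg ((one_le_div (by linarith)).2 h2')
    have hl2 : 0 ≤ Real.log (ε₀ / (1 / R)) :=
      Real.log_nonneg ((one_le_div (by positivity)).2 h1)
    have h4 := ENNReal.toReal_mono (by finiteness) h3
    rw [ENNReal.toReal_add (by finiteness) hMt, ENNReal.toReal_mul, ENNReal.toReal_mul,
      ENNReal.toReal_ofReal hl1, ENNReal.toReal_ofReal hl2, ENNReal.toReal_div,
      ENNReal.toReal_natCast, Real.log_div (by positivity) (by linarith), Real.log_pow,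
      Real.log_div hε₀.ne' (by positivity), one_div, Real.log_inv, sub_neg_eq_add] at h4
    exact h4
  have hablt : a.toReal < b.toReal := (ENNReal.toReal_lt_toReal hatop hbtop).2 hab
  set Q := a.toReal * Real.log ε₀ + M.toReal + b.toReal / (m + 1 : ℕ) * Real.log s₀ with hQ
  have hlog := Real.tendsto_log_atTop.eventually_gt_atTop (Q / (b.toReal - a.toReal))
  obtain ⟨R, hRl, hR1, hR2, hR3⟩ := (hlog.and ((eventually_ge_atTop 1).and
    ((eventually_ge_atTop (1 / ε₀)).and (eventually_ge_atTop s₀)))).exists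
  have h5 := hreal R hR1 (by
    rw [div_le_iff₀ (by linarith)]
    rw [div_le_iff₀ hε₀] at hR2
    linarith) hR3
  rw [div_lt_iff₀ (by linarith)] at hRl
  have h6 : b.toReal / (m + 1 : ℕ) * ((m + 1 : ℕ) * Real.log R - Real.log s₀) =
      b.toReal * Real.log R - b.toReal / (m + 1 : ℕ) * Real.log s₀ := by
    have : ((m + 1 : ℕ) : ℝ) ≠ 0 := by positivity
    field_simp
  rw [h6] at h5
  rw [hQ] at hRl
  nlinarith
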